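/- Let p be a prime, n a natural number, λ_1 ≥ ⋯ ≥ λ_t a partition of n, U = ℤ/p^{λ_1}ℤ ⊕ ⋯ ⊕ ℤ/p^{λ_t}ℤ, and V = R_n/(T^{λ_1}) ⊕ ⋯ ⊕ R_n/(T^{λ_t}) over R_n = (ℤ/pℤ)[X]/(X^n). Then there exists a bijection Φ between the set of isomorphism classes of ℤ-bilinear multiplications μ on U with p·μ(x,y) = 0 for all x,y, and the set of isomorphism classes of R_n-bilinear multiplications ν on V with T•ν(x,y) = 0 for all x,y, such that: (a) the class of μ satisfies the Lie axioms (μ(x,x) = 0 for all x, and the Jacobi identity μ(μ(x,y),z) + μ(μ(y,z),x) + μ(μ(z,x),y) = 0 for all x,y,z) if and only if the class Φ(μ) satisfies the Lie axioms; and (b) when both classes are Lie, the Lie ring (U,μ) is nilpotent if and only if the R_n-Lie algebra (V,Φ(μ)) is nilpotent. -/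

import Mathlib

set_option synthInstance.maxHeartbeats 1000000
open Polynomial

/-- The ring `R_n = (ℤ/pℤ)[X]/(Xⁿ)`. -/
noncomputable abbrev Rn (p n : ℕ) : Type :=
  Polynomial (ZMod p) ⧸ Ideal.span {(X : Polynomial (ZMod p)) ^ n}

/-- `T`, the image of `X` in `R_n`. -/
noncomputable def Tn (p n : ℕ) : Rn p n := Ideal.Quotient.mk _ X

/-- The abelian group `U = ℤ/p^{λ₁}ℤ ⊕ ⋯ ⊕ ℤ/p^{λ_t}ℤ`. -/
abbrev Umod (p t : ℕ) (lam : Fin t → ℕ) : Type := ∀ j : Fin t, ZMod (p ^ lam j)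

/-- The `R_n`-module `V = R_n/(T^{λ₁}) ⊕ ⋯ ⊕ R_n/(T^{λ_t})`. -/
noncomputable abbrev Vmod (p n t : ℕ) (lam : Fin t → ℕ) : Type :=
  ∀ j : Fin t, Rn p n ⧸ Submodule.span (Rn p n) {Tn p n ^ lam j}

/-- `ℤ`-bilinear (i.e. biadditive) multiplications on `U` killed by `p`. -/
def MulU (p t : ℕ) (lam : Fin t → ℕ) : Type :=
  { μ : Umod p t lam →+ Umod p t lam →+ Umod p t lam // ∀ x y, p • μ x y = 0 }

/-- `R_n`-bilinear multiplications on `V` killed by `T`. -/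
noncomputable def MulV (p n t : ℕ) (lam : Fin t → ℕ) : Type :=
  { ν : Vmod p n t lam →ₗ[Rn p n] Vmod p n t lam →ₗ[Rn p n] Vmod p n t lam //
      ∀ x y, Tn p n • ν x y = 0 }

/-- Isomorphism of multiplications on `U`, via additive automorphisms of `U`. -/
def relU (p t : ℕ) (lam : Fin t → ℕ) (μ₁ μ₂ : MulU p t lam) : Prop :=
  ∃ α : Umod p t lam ≃+ Umod p t lam, ∀ x y, α (μ₁.1 x y) = μ₂.1 (α x) (α y)

/-- Isomorphism of multiplications on `V`, via `R_n`-module automorphisms of `V`. -/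
def relV (p n t : ℕ) (lam : Fin t → ℕ) (ν₁ ν₂ : MulV p n t lam) : Prop :=
  ∃ α : Vmod p n t lam ≃ₗ[Rn p n] Vmod p n t lam, ∀ x y, α (ν₁.1 x y) = ν₂.1 (α x) (α y)

/-- A multiplication on `U` satisfies the Lie axioms. -/
def IsLieU (p t : ℕ) (lam : Fin t → ℕ) (μ : MulU p t lam) : Prop :=
  (∀ x, μ.1 x x = 0) ∧
    ∀ x y z, μ.1 (μ.1 x y) z + μ.1 (μ.1 y z) x + μ.1 (μ.1 z x) y = 0

/-- A multiplication on `V` satisfies the Lie axioms. -/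
def IsLieV (p n t : ℕ) (lam : Fin t → ℕ) (ν : MulV p n t lam) : Prop :=
  (∀ x, ν.1 x x = 0) ∧
    ∀ x y z, ν.1 (ν.1 x y) z + ν.1 (ν.1 y z) x + ν.1 (ν.1 z x) y = 0

/-- Left-normed iterated products `(…((f 0 · f 1) · f 2)…) · f k` of a multiplication on `U`. -/
def leftIterU (p t : ℕ) (lam : Fin t → ℕ) (μ : MulU p t lam) :
    ℕ → (ℕ → Umod p t lam) → Umod p t lam
  | 0, f => f 0
  | k + 1, f => μ.1 (leftIterU p t lam μ k f) (f (k + 1))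

/-- Left-normed iterated products of a multiplication on `V`. -/
noncomputable def leftIterV (p n t : ℕ) (lam : Fin t → ℕ) (ν : MulV p n t lam) :
    ℕ → (ℕ → Vmod p n t lam) → Vmod p n t lam
  | 0, f => f 0
  | k + 1, f => ν.1 (leftIterV p n t lam ν k f) (f (k + 1))

/-- Nilpotency (for Lie multiplications): some lower-central-series term vanishes; equivalently
all left-normed products of some fixed length vanish. -/
def IsNilU (p t : ℕ) (lam : Fin t → ℕ) (μ : MulU p t lam) : Prop :=
  ∃ k, ∀ f : ℕ → Umod p t lam, leftIterU p t lam μ k f = 0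

/-- Nilpotency for multiplications on `V`. -/
def IsNilV (p n t : ℕ) (lam : Fin t → ℕ) (ν : MulV p n t lam) : Prop :=
  ∃ k, ∀ f : ℕ → Vmod p n t lam, leftIterV p n t lam ν k f = 0

/-!
Let `M = ⨁ A/(π^{m_j+1})` with `π` regular in `A`, and let `k = A/(π)`; both `U` (with `A = ℤ`,
`π = p`) and `V` (with `A = (ℤ/p)[X]`, `π = X`) are of this form, with the same exponents and the
same `k`. A multiplication on `M` killed by `π` factors as `M × M → M/πM × M/πM → M[π] → M`, and
the generators of `M` identify both `M/πM` and `M[π]` with `k^t`; what remains is a `k`-bilinear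
map `c : k^t × k^t → k^t`, its reduced form. An endomorphism of `M` has a matrix `π^{m_i-m_j} b_ij`
(truncated subtraction), and it acts on `M/πM` and on `M[π]` through the entries of `b` modulo `π`
with `m_i ≤ m_j`, respectively `m_j ≤ m_i`. Hence isomorphism of reduced forms depends only on the
exponents and on `k`. So do the Lie axioms and nilpotency, because the composite
`M[π] → M → M/πM` is the projection onto the coordinates with `m_j = 0`.
-/

section BinaryOperations

variable {M N : Type*} {m : M → M → M} {m' : N → N → N}

/-- Left-normed products `(…((f 0 · f 1) · f 2)…) · f k`. -/
def leftNormed (m : M → M → M) : ℕ → (ℕ → M) → M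
  | 0, f => f 0
  | k + 1, f => m (leftNormed m k f) (f (k + 1))

theorem map_leftNormed (φ : M → N) (hφ : ∀ x y, φ (m x y) = m' (φ x) (φ y)) (k : ℕ) (f : ℕ → M) :
    φ (leftNormed m k f) = leftNormed m' k (φ ∘ f) := by
  induction k with
  | zero => rfl
  | succ k ih => rw [leftNormed, leftNormed, hφ, ih, Function.comp_apply]

variable [AddCommGroup M] [AddCommGroup N]

/-- The Lie axioms for a binary operation. -/
def IsLieOp (m : M → M → M) : Prop :=
  (∀ x, m x x = 0) ∧ ∀ x y z, m (m x y) z + m (m y z) x + m (m z x) y = 0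

/-- Nilpotency of a binary operation: all left-normed products of some length vanish. -/
def IsNilpotentOp (m : M → M → M) : Prop :=
  ∃ k, ∀ f : ℕ → M, leftNormed m k f = 0

theorem IsNilpotentOp.of_surjective {φ : M →+ N}
    (hφ : ∀ x y, φ (m x y) = m' (φ x) (φ y)) (hsurj : Function.Surjective φ)
    (hm : IsNilpotentOp m) : IsNilpotentOp m' := by
  obtain ⟨k, hk⟩ := hm
  refine ⟨k, fun f => ?_⟩
  obtain ⟨g, rfl⟩ := hsurj.comp_left f
  rw [← map_leftNormed φ hφ, hk, map_zero]

theorem isNilpotentOp_congr (e : M ≃+ N)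
    (he : ∀ x y, e (m x y) = m' (e x) (e y)) : IsNilpotentOp m ↔ IsNilpotentOp m' := by
  refine ⟨.of_surjective (φ := e.toAddMonoidHom) he e.surjective,
    .of_surjective (φ := e.symm.toAddMonoidHom) (fun x y => ?_) e.symm.surjective⟩
  exact e.injective (by simp [he])

theorem isLieOp_congr (e : M ≃+ N)
    (he : ∀ x y, e (m x y) = m' (e x) (e y)) : IsLieOp m ↔ IsLieOp m' := by
  simp only [IsLieOp, e.surjective.forall, ← he, ← map_add, map_eq_zero_iff e e.injective]

end BinaryOperations

section TorsionMul

variable {A : Type*} [CommRing A] (π : A) (M : Type*) [AddCommGroup M] [Module A M]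

/-- The `A`-bilinear multiplications on `M` all of whose products are killed by `π`. -/
def TorsionMul : Type _ :=
  { μ : M →ₗ[A] M →ₗ[A] M // ∀ x y, π • μ x y = 0 }

namespace TorsionMul

variable {π M}

/-- Isomorphism of multiplications, via `A`-linear automorphisms of `M`. -/
def Iso (μ ν : TorsionMul π M) : Prop :=
  ∃ α : M ≃ₗ[A] M, ∀ x y, α (μ.1 x y) = ν.1 (α x) (α y)

/-- The underlying binary operation. -/
def op (μ : TorsionMul π M) (x y : M) : M := μ.1 x y

variable {R : Type*} [CommRing R] [Algebra A R] [Module R M] [IsScalarTower A R M]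

/-- Bilinearity over a quotient `R` of `A` is the same as bilinearity over `A`. -/
def restrictScalarsEquiv (hR : Function.Surjective (algebraMap A R)) (π : A) :
    TorsionMul (algebraMap A R π) M ≃ TorsionMul π M where
  toFun μ := ⟨μ.1.restrictScalars₁₂ A A, fun x y => by
    rw [← algebraMap_smul R]; exact μ.2 x y⟩
  invFun μ := ⟨LinearMap.mk₂ R (fun x y => μ.1 x y) (LinearMap.map_add₂ μ.1)
      (hR.forall.2 fun a x y => by simp) (fun x => map_add (μ.1 x))
      (hR.forall.2 fun a x y => by simp),
    fun x y => by rw [algebraMap_smul]; exact μ.2 x y⟩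
  left_inv _ := rfl
  right_inv _ := rfl

theorem iso_restrictScalarsEquiv_iff (hR : Function.Surjective (algebraMap A R)) {π : A}
    (μ ν : TorsionMul (algebraMap A R π) M) :
    (restrictScalarsEquiv hR π μ).Iso (restrictScalarsEquiv hR π ν) ↔ μ.Iso ν :=
  ⟨fun ⟨α, hα⟩ => ⟨α.extendScalarsOfSurjective hR, hα⟩,
    fun ⟨α, hα⟩ => ⟨α.restrictScalars A, hα⟩⟩

end TorsionMul

end TorsionMul

section LinearAlgebra

variable {A M N P : Type*} [CommRing A] [AddCommGroup M] [Module A M] [AddCommGroup N]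
  [Module A N] [AddCommGroup P] [Module A P]

/-- The factorization through a surjection `f` of a linear map `g` that vanishes on `ker f`. -/
noncomputable def descend (f : M →ₗ[A] N) (hf : Function.Surjective f) (g : M →ₗ[A] P)
    (h : f.ker ≤ g.ker) : N →ₗ[A] P :=
  f.ker.liftQ g h ∘ₗ (f.quotKerEquivOfSurjective hf).symm.toLinearMap

@[simp]
theorem descend_apply {f : M →ₗ[A] N} {hf : Function.Surjective f} {g : M →ₗ[A] P}
    (h : f.ker ≤ g.ker) (x : M) : descend f hf g h (f x) = g x := by
  have : (f.quotKerEquivOfSurjective hf).symm (f x) = f.ker.mkQ x :=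
    (LinearEquiv.symm_apply_eq _).2 rfl
  simp [descend, this]

theorem surjective_of_surjective_mod_smul {α : N →ₗ[A] M} {π : A} {k : ℕ}
    (hα : ∀ x, ∃ y z, x = α y + π • z) (hk : ∀ x : M, π ^ k • x = 0) :
    Function.Surjective α := by
  have approx (i : ℕ) : ∀ x, ∃ y z, x = α y + π ^ i • z := by
    induction i with
    | zero => exact fun x => ⟨0, x, by simp⟩
    | succ i ih =>
      intro x
      obtain ⟨y, z, rfl⟩ := ih x
      obtain ⟨y', z', rfl⟩ := hα z
      exact ⟨y + π ^ i • y', z', by simp [pow_succ, mul_smul, add_assoc]⟩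
  intro x
  obtain ⟨y, z, rfl⟩ := approx k x
  exact ⟨y, by rw [hk, add_zero]⟩

end LinearAlgebra

/-- `k` is the residue ring `A/(π)` of a regular element `π`. -/
structure IsRegularQuotient {A : Type*} (k : Type*) [CommRing A] [CommRing k] [Algebra A k]
    (π : A) : Prop where
  isRegular : IsRegular π
  surjective : Function.Surjective (algebraMap A k)
  algebraMap_eq_zero_iff (a : A) : algebraMap A k a = 0 ↔ π ∣ a

theorem isRegularQuotient_zmod (p : ℕ) [NeZero p] : IsRegularQuotient (ZMod p) (p : ℤ) where
  isRegular := .of_ne_zero (mod_cast NeZero.ne p)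
  surjective := ZMod.intCast_surjective
  algebraMap_eq_zero_iff a := ZMod.intCast_zmod_eq_zero_iff_dvd a p

section Matrices

variable {ι R S : Type*} [CommRing R] [CommRing S]

/-- The matrix on generators of an endomorphism of `⨁ A/(π^{m_j+1})` with coefficients `b`: a
generator killed by `π^{m_j+1}` can only be sent to a multiple of `π^{m_i-m_j}` in the `i`-th
summand. The subtraction is truncated. -/
def endMatrix (π : R) (m : ι → ℕ) (b : Matrix ι ι R) : Matrix ι ι R :=
  .of fun i j => π ^ (m i - m j) * b i j

/-- The action on `M/πM` of the endomorphism of `M = ⨁ A/(π^{m_j+1})` with coefficients `b`. -/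
def topMatrix (m : ι → ℕ) (b : Matrix ι ι R) : Matrix ι ι R :=
  .of fun i j => if m i ≤ m j then b i j else 0

/-- The action on the `π`-torsion of the endomorphism of `M = ⨁ A/(π^{m_j+1})` with
coefficients `b`, in the coordinates given by the elements `π^{m_j} g_j`. -/
def socleMatrix (m : ι → ℕ) (b : Matrix ι ι R) : Matrix ι ι R :=
  .of fun i j => if m j ≤ m i then b i j else 0

theorem map_endMatrix (f : R →+* S) {π : R} (hπ : f π = 0) (m : ι → ℕ) (b : Matrix ι ι R) :
    (endMatrix π m b).map f = topMatrix m (b.map f) := by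
  ext i j
  by_cases hij : m i ≤ m j
  · simp [endMatrix, topMatrix, hij]
  · simp [endMatrix, topMatrix, hij, hπ, Nat.sub_ne_zero_of_lt (not_le.1 hij)]

theorem map_socleMatrix (f : R →+* S) (m : ι → ℕ) (b : Matrix ι ι R) :
    (socleMatrix m b).map f = socleMatrix m (b.map f) := by
  ext i j
  simp [socleMatrix, apply_ite f]

theorem pow_dvd_endMatrix_sub_socleMatrix (π : R) (m : ι → ℕ) (b : Matrix ι ι R) (i j : ι) :
    π ^ (m i + 1) ∣ endMatrix π m b i j * π ^ m j - π ^ m i * socleMatrix m b i j := by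
  simp only [endMatrix, socleMatrix, Matrix.of_apply]
  split_ifs with hij
  · rw [mul_right_comm, pow_sub_mul_pow π hij, sub_self]
    exact dvd_zero _
  · rw [mul_zero, sub_zero]
    exact (pow_dvd_pow π (not_le.1 hij)).mul_left _

theorem pow_dvd_pow_mul_endMatrix (π : R) (m : ι → ℕ) (b : Matrix ι ι R) (i j : ι) :
    π ^ (m i + 1) ∣ π ^ (m j + 1) * endMatrix π m b i j := by
  rw [endMatrix, Matrix.of_apply, ← mul_assoc, ← pow_add]
  exact (pow_dvd_pow π (by lia)).mul_right _

theorem exists_eq_endMatrix {π : R} (hπ : IsRegular π) {m : ι → ℕ} {a : Matrix ι ι R}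
    (ha : ∀ i j, π ^ (m i + 1) ∣ π ^ (m j + 1) * a i j) : ∃ b, a = endMatrix π m b := by
  have dvd (i j : ι) : π ^ (m i - m j) ∣ a i j := by
    obtain hij | hij := le_total (m i) (m j)
    · simp [hij]
    · have h := ha i j
      rw [show m i + 1 = m j + 1 + (m i - m j) by lia, pow_add] at h
      exact (hπ.pow _).left.dvd_cancel_left.1 h
  choose b hb using dvd
  exact ⟨.of b, Matrix.ext hb⟩

end Matrices

section CyclicPresentation

variable {ι A k M : Type*} [CommRing A] [CommRing k] [Algebra A k] [AddCommGroup M] [Module A M]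
  {π : A} {m : ι → ℕ}

/-- An isomorphism of `M` with `⨁ A/(π^{m_j+1})`, given by the surjection from the free module
`A^ι`. Writing the exponents as `m_j + 1` makes them positive. -/
structure CyclicPresentation (π : A) (m : ι → ℕ) (M : Type*) [AddCommGroup M] [Module A M] where
  /-- The map sending `r` to the combination of the cyclic generators with coefficients `r`. -/
  combination : (ι → A) →ₗ[A] M
  surjective : Function.Surjective combination
  combination_eq_zero_iff (r : ι → A) : combination r = 0 ↔ ∀ j, π ^ (m j + 1) ∣ r j

/-- Coordinatewise reduction modulo `π`. -/
def residue (ι A k : Type*) [CommRing A] [CommRing k] [Algebra A k] : (ι → A) →ₗ[A] (ι → k) :=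
  (Algebra.linearMap A k).compLeft ι

@[simp]
theorem residue_apply (r : ι → A) (j : ι) : residue ι A k r j = algebraMap A k (r j) := rfl

theorem residue_mulVec [Fintype ι] (a : Matrix ι ι A) (r : ι → A) :
    residue ι A k (a.mulVec r) = (a.map (algebraMap A k)).mulVec (residue ι A k r) :=
  funext fun i => (algebraMap A k).map_mulVec a r i

namespace IsRegularQuotient

variable (H : IsRegularQuotient k π)
include H

theorem algebraMap_self : algebraMap A k π = 0 := (H.algebraMap_eq_zero_iff π).2 dvd_rfl

theorem smul_eq_zero (w : ι → k) : π • w = 0 := by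
  rw [← algebraMap_smul k, H.algebraMap_self, zero_smul]

theorem residue_surjective : Function.Surjective (residue ι A k) := H.surjective.comp_left

theorem residue_eq_zero_iff (r : ι → A) : residue ι A k r = 0 ↔ ∀ j, π ∣ r j := by
  simp [funext_iff, H.algebraMap_eq_zero_iff]

end IsRegularQuotient

namespace CyclicPresentation

variable (P : CyclicPresentation π m M) (H : IsRegularQuotient k π)

theorem combination_eq_iff (r s : ι → A) :
    P.combination r = P.combination s ↔ ∀ j, π ^ (m j + 1) ∣ r j - s j := by
  rw [← sub_eq_zero, ← map_sub, P.combination_eq_zero_iff]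
  rfl

/-- The projection of `M` onto `M/πM`, identified with `k^ι` by means of the generators. -/
noncomputable def top : M →ₗ[A] (ι → k) :=
  descend P.combination P.surjective (residue ι A k) fun r hr =>
    (H.residue_eq_zero_iff r).2 fun j =>
      (dvd_pow_self π (m j).succ_ne_zero).trans ((P.combination_eq_zero_iff r).1 hr j)

@[simp]
theorem top_combination (r : ι → A) : P.top H (P.combination r) = residue ι A k r :=
  descend_apply _ r

/-- The inclusion into `M` of its `π`-torsion, identified with `k^ι` by means of the elements
`π^{m_j} g_j`, where `g_j` are the generators. -/
noncomputable def socle : (ι → k) →ₗ[A] M :=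
  descend (residue ι A k) H.residue_surjective
    (P.combination ∘ₗ LinearMap.mulLeft A fun j => π ^ m j) fun r hr =>
      (P.combination_eq_zero_iff _).2 fun j =>
        pow_succ π (m j) ▸ mul_dvd_mul_left (π ^ m j) ((H.residue_eq_zero_iff r).1 hr j)

@[simp]
theorem socle_residue (r : ι → A) :
    P.socle H (residue ι A k r) = P.combination fun j => π ^ m j * r j :=
  descend_apply _ r

theorem top_surjective : Function.Surjective (P.top H) :=
  H.residue_surjective.forall.2 fun r => ⟨P.combination r, P.top_combination H r⟩

theorem socle_injective : Function.Injective (P.socle H) := by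
  refine (injective_iff_map_eq_zero _).2 (H.residue_surjective.forall.2 fun r hr => ?_)
  simp only [socle_residue, P.combination_eq_zero_iff, pow_succ] at hr
  exact (H.residue_eq_zero_iff r).2 fun j => (H.isRegular.pow (m j)).left.dvd_cancel_left.1 (hr j)

theorem smul_socle (w : ι → k) : π • P.socle H w = 0 := by
  rw [← map_smul, H.smul_eq_zero, map_zero]

theorem exists_socle_eq {x : M} (hx : π • x = 0) : ∃ w, P.socle H w = x := by
  obtain ⟨r, rfl⟩ := P.surjective x
  rw [← map_smul, P.combination_eq_zero_iff] at hx
  have dvd (j : ι) : π ^ m j ∣ r j := by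
    have h := hx j
    rw [pow_succ'] at h
    exact H.isRegular.left.dvd_cancel_left.1 h
  choose s hs using dvd
  exact ⟨residue ι A k s, by rw [socle_residue, funext hs]⟩

theorem exists_smul_eq_of_top_eq_zero {x : M} (hx : P.top H x = 0) : ∃ y, π • y = x := by
  obtain ⟨r, rfl⟩ := P.surjective x
  rw [top_combination, H.residue_eq_zero_iff] at hx
  choose s hs using hx
  exact ⟨P.combination s, by rw [← map_smul]; exact congrArg _ (funext hs).symm⟩

theorem exists_add_smul_eq_of_top_eq {x y : M} (h : P.top H x = P.top H y) :
    ∃ z, x = y + π • z := by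
  rw [← sub_eq_zero, ← map_sub] at h
  obtain ⟨z, hz⟩ := P.exists_smul_eq_of_top_eq_zero H h
  exact ⟨z, by rw [hz, add_sub_cancel]⟩

theorem top_socle (w : ι → k) : P.top H (P.socle H w) = fun j => if m j = 0 then w j else 0 := by
  obtain ⟨r, rfl⟩ := H.residue_surjective w
  ext j
  by_cases hj : m j = 0 <;> simp [hj, H.algebraMap_self]

section Endomorphisms

variable [Fintype ι]

/-- The endomorphism `α` of `M` acts on `M/πM` and on the `π`-torsion of `M` as the endomorphism
with coefficients `b`. -/
def Induces (α : M →ₗ[A] M) (b : Matrix ι ι k) : Prop :=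
  (∀ x, P.top H (α x) = (topMatrix m b).mulVec (P.top H x)) ∧
    ∀ w, α (P.socle H w) = P.socle H ((socleMatrix m b).mulVec w)

variable {P} in
theorem induces_of_combination {α : M →ₗ[A] M} {b : Matrix ι ι A}
    (hα : ∀ r, α (P.combination r) = P.combination ((endMatrix π m b).mulVec r)) :
    P.Induces H α (b.map (algebraMap A k)) := by
  refine ⟨P.surjective.forall.2 fun r => ?_, H.residue_surjective.forall.2 fun r => ?_⟩
  · rw [hα, top_combination, top_combination, residue_mulVec, map_endMatrix _ H.algebraMap_self]
  · rw [socle_residue, hα, ← map_socleMatrix, ← residue_mulVec, socle_residue,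
      P.combination_eq_iff]
    intro i
    simp only [Matrix.mulVec, dotProduct, Finset.mul_sum, ← Finset.sum_sub_distrib, ← mul_assoc,
      ← sub_mul]
    exact Finset.dvd_sum fun j _ => (pow_dvd_endMatrix_sub_socleMatrix π m b i j).mul_right _

theorem exists_matrix_combination (α : M →ₗ[A] M) :
    ∃ a : Matrix ι ι A, ∀ r, α (P.combination r) = P.combination (a.mulVec r) := by
  classical
  choose a ha using fun j => P.surjective (α (P.combination (Pi.single j 1)))
  have : α ∘ₗ P.combination = P.combination ∘ₗ (Matrix.of a).transpose.mulVecLin :=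
    LinearMap.pi_ext' fun j => LinearMap.ext_ring (by simpa using (ha j).symm)
  exact ⟨_, LinearMap.congr_fun this⟩

theorem exists_induces (α : M →ₗ[A] M) : ∃ b, P.Induces H α b := by
  classical
  obtain ⟨a, ha⟩ := P.exists_matrix_combination α
  have dvd (i j : ι) : π ^ (m i + 1) ∣ π ^ (m j + 1) * a i j := by
    have relation : P.combination (Pi.single j (π ^ (m j + 1))) = 0 :=
      (P.combination_eq_zero_iff _).2 fun i => by
        obtain rfl | hij := eq_or_ne i j <;> simp [*]
    have h := ha (Pi.single j (π ^ (m j + 1)))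
    rw [relation, map_zero, eq_comm, P.combination_eq_zero_iff] at h
    simpa [mul_comm] using h i
  obtain ⟨b, rfl⟩ := exists_eq_endMatrix H.isRegular dvd
  exact ⟨_, induces_of_combination H ha⟩

theorem exists_endomorphism_induces (b : Matrix ι ι k) : ∃ α, P.Induces H α b := by
  choose b₀ hb₀ using fun i j => H.surjective (b i j)
  obtain rfl : Matrix.map (.of b₀) (algebraMap A k) = b := Matrix.ext hb₀
  let a := endMatrix π m (.of b₀)
  have ker_le : P.combination.ker ≤ (P.combination ∘ₗ a.mulVecLin).ker := by
    intro r hr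
    have hr := (P.combination_eq_zero_iff r).1 hr
    refine (P.combination_eq_zero_iff _).2 fun i => Finset.dvd_sum fun j _ => ?_
    rw [mul_comm]
    exact (pow_dvd_pow_mul_endMatrix π m _ i j).trans (mul_dvd_mul_right (hr j) _)
  exact ⟨descend P.combination P.surjective (P.combination ∘ₗ a.mulVecLin) ker_le,
    induces_of_combination H (descend_apply ker_le)⟩

include P in
theorem pow_smul_eq_zero (x : M) : π ^ (∑ j, (m j + 1)) • x = 0 := by
  obtain ⟨r, rfl⟩ := P.surjective x
  rw [← map_smul, P.combination_eq_zero_iff]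
  exact fun j => (pow_dvd_pow π (Finset.single_le_sum (f := fun j => m j + 1)
    (fun _ _ => Nat.zero_le _) (Finset.mem_univ j))).mul_right _

variable {P H} in
theorem Induces.surjective_topMatrix {α : M →ₗ[A] M} {b : Matrix ι ι k} (h : P.Induces H α b)
    (hα : Function.Surjective α) : Function.Surjective (topMatrix m b).mulVec := by
  intro w
  obtain ⟨x, rfl⟩ := ((P.top_surjective H).comp hα) w
  exact ⟨P.top H x, (h.1 x).symm⟩

variable {P H} in
theorem Induces.bijective {α : M →ₗ[A] M} {b : Matrix ι ι k} (h : P.Induces H α b)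
    (hb : Function.Surjective (topMatrix m b).mulVec) : Function.Bijective α := by
  have : Module.Finite A M := .of_surjective P.combination P.surjective
  refine OrzechProperty.bijective_of_surjective_endomorphism α
    (surjective_of_surjective_mod_smul (π := π) (fun x => ?_) P.pow_smul_eq_zero)
  obtain ⟨w, hw⟩ := hb (P.top H x)
  obtain ⟨y, rfl⟩ := P.top_surjective H w
  obtain ⟨z, hz⟩ := P.exists_add_smul_eq_of_top_eq H (hw.symm.trans (h.1 y).symm)
  exact ⟨y, z, hz⟩

end Endomorphisms

end CyclicPresentation

end CyclicPresentation

section ReducedMul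

variable {ι k : Type*} [CommRing k]

/-- The `k`-bilinear multiplications on `k^ι`. A multiplication on `M` killed by `π` amounts to
such a map `M/πM × M/πM → M[π]`, written in the coordinates of a cyclic presentation. -/
abbrev ReducedMul (ι k : Type*) [CommRing k] : Type _ :=
  (ι → k) →ₗ[k] (ι → k) →ₗ[k] (ι → k)

namespace ReducedMul

/-- The operation on `k^ι ≅ M/πM` induced by the multiplication on `M` with reduced form `c`. -/
def op (m : ι → ℕ) (c : ReducedMul ι k) (u v : ι → k) : ι → k :=
  fun j => if m j = 0 then c u v j else 0

/-- Isomorphism of multiplications on `M`, in terms of their reduced forms. -/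
def Iso [Fintype ι] (m : ι → ℕ) (c d : ReducedMul ι k) : Prop :=
  ∃ b : Matrix ι ι k, Function.Surjective (topMatrix m b).mulVec ∧ ∀ u v,
    (socleMatrix m b).mulVec (c u v) = d ((topMatrix m b).mulVec u) ((topMatrix m b).mulVec v)

/-- The Lie axioms for a multiplication on `M`, in terms of its reduced form. -/
def IsLie (m : ι → ℕ) (c : ReducedMul ι k) : Prop :=
  (∀ u, c u u = 0) ∧
    ∀ u v w, c (c.op m u v) w + c (c.op m v w) u + c (c.op m w u) v = 0

end ReducedMul

end ReducedMul

section Inflation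

variable {ι k A M : Type*} [CommRing k] [CommRing A] [Algebra A k] [AddCommGroup M] [Module A M]
  {π : A} {m : ι → ℕ}

namespace CyclicPresentation

variable (P : CyclicPresentation π m M) (H : IsRegularQuotient k π)

/-- The multiplication `M × M → M/πM × M/πM → M[π] → M` with reduced form `c`. -/
noncomputable def inflate (c : ReducedMul ι k) : TorsionMul π M :=
  ⟨((c.restrictScalars₁₂ A A).compl₁₂ (P.top H) (P.top H)).compr₂ (P.socle H),
    fun _ _ => P.smul_socle H _⟩

theorem inflate_op (c : ReducedMul ι k) (x y : M) :
    (P.inflate H c).op x y = P.socle H (c (P.top H x) (P.top H y)) := rfl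

theorem top_inflate_op (c : ReducedMul ι k) (x y : M) :
    P.top H ((P.inflate H c).op x y) = c.op m (P.top H x) (P.top H y) :=
  P.top_socle H _

theorem inflate_injective : Function.Injective (P.inflate H) := by
  refine fun c d h => LinearMap.ext₂ ((P.top_surjective H).forall₂.2 fun x y => ?_)
  exact P.socle_injective H (congrArg (fun μ => TorsionMul.op μ x y) h)

theorem op_eq_of_top_eq (μ : TorsionMul π M) {x x' y y' : M} (hx : P.top H x = P.top H x')
    (hy : P.top H y = P.top H y') : μ.op x y = μ.op x' y' := by
  obtain ⟨u, rfl⟩ := P.exists_add_smul_eq_of_top_eq H hx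
  obtain ⟨v, rfl⟩ := P.exists_add_smul_eq_of_top_eq H hy
  simp [TorsionMul.op, μ.2]

theorem exists_socle_eq_op (μ : TorsionMul π M) :
    ∃ f : (ι → k) → (ι → k) → (ι → k),
      ∀ x y, P.socle H (f (P.top H x) (P.top H y)) = μ.op x y := by
  choose f hf using fun x y => P.exists_socle_eq H (μ.2 x y)
  choose s hs using P.top_surjective H
  exact ⟨fun u v => f (s u) (s v), fun x y =>
    (hf _ _).trans (P.op_eq_of_top_eq H μ (hs _) (hs _))⟩

theorem inflate_surjective : Function.Surjective (P.inflate H) := by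
  intro μ
  obtain ⟨f, hf⟩ := P.exists_socle_eq_op H μ
  have htop := P.top_surjective H
  have add_left : ∀ u u' v, f (u + u') v = f u v + f u' v :=
    htop.forall₃.2 fun x x' y => P.socle_injective H <| by
      rw [map_add, ← map_add (P.top H), hf, hf, hf]
      exact LinearMap.map_add₂ μ.1 x x' y
  have smul_left : ∀ (a : k) u v, f (a • u) v = a • f u v :=
    H.surjective.forall.2 fun a => htop.forall₂.2 fun x y => P.socle_injective H <| by
      rw [algebraMap_smul, algebraMap_smul, map_smul, ← map_smul (P.top H), hf, hf]
      exact LinearMap.map_smul₂ μ.1 a x y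
  have add_right : ∀ u v v', f u (v + v') = f u v + f u v' :=
    htop.forall₃.2 fun x y y' => P.socle_injective H <| by
      rw [map_add, ← map_add (P.top H), hf, hf, hf]
      exact map_add (μ.1 x) y y'
  have smul_right : ∀ (a : k) u v, f u (a • v) = a • f u v :=
    H.surjective.forall.2 fun a => htop.forall₂.2 fun x y => P.socle_injective H <| by
      rw [algebraMap_smul, algebraMap_smul, map_smul, ← map_smul (P.top H), hf, hf]
      exact map_smul (μ.1 x) a y
  exact ⟨LinearMap.mk₂ k f add_left smul_left add_right smul_right,
    Subtype.ext (LinearMap.ext₂ hf)⟩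

theorem inflate_iso_iff [Fintype ι] (c d : ReducedMul ι k) :
    (P.inflate H c).Iso (P.inflate H d) ↔ c.Iso m d := by
  constructor
  · rintro ⟨α, hα⟩
    obtain ⟨b, hb⟩ := P.exists_induces H α.toLinearMap
    refine ⟨b, hb.surjective_topMatrix α.surjective, (P.top_surjective H).forall₂.2 fun x y =>
      P.socle_injective H ?_⟩
    rw [← hb.2, ← hb.1, ← hb.1]
    exact hα x y
  · rintro ⟨b, hsurj, hc⟩
    obtain ⟨α, hα⟩ := P.exists_endomorphism_induces H b
    refine ⟨.ofBijective α (hα.bijective hsurj), fun x y => ?_⟩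
    change α (P.socle H _) = P.socle H (d (P.top H (α x)) (P.top H (α y)))
    rw [hα.2, hα.1, hα.1, ← hc]
    rfl

theorem isLieOp_inflate_iff (c : ReducedMul ι k) : IsLieOp (P.inflate H c).op ↔ c.IsLie m := by
  simp only [IsLieOp, ReducedMul.IsLie, (P.top_surjective H).forall, ← top_inflate_op,
    inflate_op, ← map_add, map_eq_zero_iff _ (P.socle_injective H)]

theorem isNilpotentOp_inflate_iff (c : ReducedMul ι k) :
    IsNilpotentOp (P.inflate H c).op ↔ IsNilpotentOp (c.op m) := by
  refine ⟨.of_surjective (φ := (P.top H).toAddMonoidHom) (P.top_inflate_op H c)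
    (P.top_surjective H), fun ⟨n, hn⟩ => ⟨n + 1, fun f => ?_⟩⟩
  rw [leftNormed, inflate_op, map_leftNormed _ (P.top_inflate_op H c), hn, map_zero,
    LinearMap.zero_apply, map_zero]

/-- The multiplications on `M` killed by `π` correspond to their reduced forms. -/
noncomputable def inflateEquiv : ReducedMul ι k ≃ TorsionMul π M :=
  .ofBijective _ ⟨P.inflate_injective H, P.inflate_surjective H⟩

end CyclicPresentation

theorem exists_torsionMul_equiv [Finite ι] {A' R M' : Type*} [CommRing A'] [Algebra A' k]
    [CommRing R] [Algebra A' R] [AddCommGroup M'] [Module A' M'] [Module R M']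
    [IsScalarTower A' R M'] {π' : A'} (hR : Function.Surjective (algebraMap A' R))
    (P : CyclicPresentation π m M) (H : IsRegularQuotient k π)
    (P' : CyclicPresentation π' m M') (H' : IsRegularQuotient k π') :
    ∃ E : TorsionMul π M ≃ TorsionMul (algebraMap A' R π') M',
      (∀ μ ν, μ.Iso ν ↔ (E μ).Iso (E ν)) ∧ ∀ μ, (IsLieOp μ.op ↔ IsLieOp (E μ).op) ∧
        (IsNilpotentOp μ.op ↔ IsNilpotentOp (E μ).op) := by
  cases nonempty_fintype ι
  let F := TorsionMul.restrictScalarsEquiv (M := M') hR π'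
  let E := ((P.inflateEquiv H).symm.trans (P'.inflateEquiv H')).trans F.symm
  have hE (c) : F (E (P.inflate H c)) = P'.inflate H' c :=
    (F.apply_symm_apply _).trans
      (congrArg (P'.inflateEquiv H') ((P.inflateEquiv H).symm_apply_apply c))
  refine ⟨E, (P.inflate_surjective H).forall₂.2 fun c d => ?_,
    (P.inflate_surjective H).forall.2 fun c => ⟨?_, ?_⟩⟩
  · rw [← TorsionMul.iso_restrictScalarsEquiv_iff hR, hE, hE, P.inflate_iso_iff,
      P'.inflate_iso_iff]
  · change _ ↔ IsLieOp (F (E (P.inflate H c))).op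
    rw [hE, P.isLieOp_inflate_iff, P'.isLieOp_inflate_iff]
  · change _ ↔ IsNilpotentOp (F (E (P.inflate H c))).op
    rw [hE, P.isNilpotentOp_inflate_iff, P'.isNilpotentOp_inflate_iff]

end Inflation

section Presentations

variable {ι A : Type*} [CommRing A] {π : A} {m : ι → ℕ}

/-- The presentation of a product of cyclic modules by presentations of the factors. -/
def CyclicPresentation.pi {M : ι → Type*} [∀ j, AddCommGroup (M j)] [∀ j, Module A (M j)]
    (f : ∀ j, A →ₗ[A] M j) (hsurj : ∀ j, Function.Surjective (f j))
    (hker : ∀ j r, f j r = 0 ↔ π ^ (m j + 1) ∣ r) : CyclicPresentation π m (∀ j, M j) where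
  combination := LinearMap.piMap f
  surjective := Function.Surjective.piMap hsurj
  combination_eq_zero_iff r := funext_iff.trans (forall_congr' fun j => hker j (r j))

theorem quotient_mk_dvd_mk_iff {a x : A} (hax : a ∣ x) (b : A) :
    Ideal.Quotient.mk (Ideal.span {x}) a ∣ Ideal.Quotient.mk (Ideal.span {x}) b ↔ a ∣ b := by
  rw [← Ideal.mem_span_singleton, ← Set.image_singleton, ← Ideal.map_span, ← Ideal.mem_comap,
    Ideal.comap_map_mk (Ideal.span_singleton_le_span_singleton.2 hax), Ideal.mem_span_singleton]

/-- The group `⨁ ℤ/p^{m_j+1}`, presented as a `ℤ`-module. -/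
def zmodPresentation (p : ℕ) (m : ι → ℕ) :
    CyclicPresentation (p : ℤ) m (∀ j, ZMod (p ^ (m j + 1))) :=
  .pi (fun _ => Algebra.linearMap ℤ _) (fun _ => ZMod.intCast_surjective) fun j r => by
    rw [← Nat.cast_pow]
    exact ZMod.intCast_zmod_eq_zero_iff_dvd r _

/-- The module `⨁ A/(π^{m_j+1})` over `A/(π^n)`, presented as an `A`-module. -/
noncomputable def quotientPresentation (π : A) {n : ℕ} (hm : ∀ j, m j + 1 ≤ n) :
    CyclicPresentation π m (∀ j, (A ⧸ Ideal.span {π ^ n}) ⧸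
      Submodule.span (A ⧸ Ideal.span {π ^ n})
        {Ideal.Quotient.mk (Ideal.span {π ^ n}) π ^ (m j + 1)}) :=
  .pi (fun _ => (Submodule.mkQ _).restrictScalars A ∘ₗ Algebra.linearMap A _)
    (fun _ => (Submodule.mkQ_surjective _).comp Ideal.Quotient.mk_surjective) fun j r => by
      change Submodule.Quotient.mk (Ideal.Quotient.mk _ r) = 0 ↔ _
      rw [Submodule.Quotient.mk_eq_zero, ← map_pow]
      exact Ideal.mem_span_singleton.trans (quotient_mk_dvd_mk_iff (pow_dvd_pow π (hm j)) r)

end Presentations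

/-- The constant coefficient, as an algebra structure of `R` over `R[X]`. -/
noncomputable abbrev constantCoeffAlgebra (R : Type*) [CommRing R] : Algebra R[X] R :=
  Polynomial.constantCoeff.toAlgebra

theorem isRegularQuotient_X (R : Type*) [CommRing R] :
    letI := constantCoeffAlgebra R
    IsRegularQuotient R (X : R[X]) :=
  letI := constantCoeffAlgebra R
  { isRegular := isRegular_X
    surjective := Polynomial.constantCoeff_surjective
    algebraMap_eq_zero_iff := fun _ => X_dvd_iff.symm }

section Additive

variable {M : Type*} [AddCommGroup M] {n : ℕ}

/-- Biadditive maps are the same as `ℤ`-bilinear maps. -/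
def torsionMulIntEquiv (n : ℕ) (M : Type*) [AddCommGroup M] :
    { μ : M →+ M →+ M // ∀ x y, n • μ x y = 0 } ≃ TorsionMul (n : ℤ) M :=
  ((addMonoidHomLequivInt ℤ).toEquiv.trans
    (LinearEquiv.congrRight (addMonoidHomLequivInt ℤ)).toEquiv).subtypeEquiv fun μ =>
      forall₂_congr fun x y => by rw [← natCast_zsmul]; rfl

theorem iso_torsionMulIntEquiv_iff (μ ν : { μ : M →+ M →+ M // ∀ x y, n • μ x y = 0 }) :
    (torsionMulIntEquiv n M μ).Iso (torsionMulIntEquiv n M ν) ↔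
      ∃ α : M ≃+ M, ∀ x y, α (μ.1 x y) = ν.1 (α x) (α y) :=
  ⟨fun ⟨α, hα⟩ => ⟨α.toAddEquiv, hα⟩, fun ⟨α, hα⟩ => ⟨α.toIntLinearEquiv, hα⟩⟩

end Additive

theorem iff_of_quot_mk_eq {α : Type*} {r : α → α → Prop} {P : α → Prop}
    {a b : α} (h : Quot.mk r a = Quot.mk r b) (hP : ∀ a b, r a b → (P a ↔ P b)) : P a ↔ P b :=
  iff_of_eq (congrArg (Quot.lift P fun a b hab => propext (hP a b hab)) h)

section ConcreteMultiplications

variable {p n t : ℕ} {lam : Fin t → ℕ}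

theorem leftIterU_eq_leftNormed (μ : MulU p t lam) (k : ℕ) (f : ℕ → Umod p t lam) :
    leftIterU p t lam μ k f = leftNormed (fun x y => μ.1 x y) k f := by
  induction k with
  | zero => rfl
  | succ k ih => rw [leftIterU, ih, leftNormed]

theorem leftIterV_eq_leftNormed (ν : MulV p n t lam) (k : ℕ) (f : ℕ → Vmod p n t lam) :
    leftIterV p n t lam ν k f = leftNormed (fun x y => ν.1 x y) k f := by
  induction k with
  | zero => rfl
  | succ k ih => rw [leftIterV, ih, leftNormed]

theorem isNilU_iff (μ : MulU p t lam) : IsNilU p t lam μ ↔ IsNilpotentOp fun x y => μ.1 x y := by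
  simp only [IsNilU, IsNilpotentOp, leftIterU_eq_leftNormed]

theorem isNilV_iff (ν : MulV p n t lam) :
    IsNilV p n t lam ν ↔ IsNilpotentOp fun x y => ν.1 x y := by
  simp only [IsNilV, IsNilpotentOp, leftIterV_eq_leftNormed]

theorem isLieV_congr {μ ν : MulV p n t lam} (h : relV p n t lam μ ν) :
    IsLieV p n t lam μ ↔ IsLieV p n t lam ν :=
  let ⟨α, hα⟩ := h
  isLieOp_congr (m := fun x y => μ.1 x y) (m' := fun x y => ν.1 x y) α.toAddEquiv hα

theorem isNilV_congr {μ ν : MulV p n t lam} (h : relV p n t lam μ ν) :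
    IsNilV p n t lam μ ↔ IsNilV p n t lam ν := by
  obtain ⟨α, hα⟩ := h
  rw [isNilV_iff, isNilV_iff]
  exact isNilpotentOp_congr α.toAddEquiv hα

end ConcreteMultiplications

theorem exists_mulU_equiv_mulV (p n t : ℕ) [NeZero p] {lam : Fin t → ℕ} (hpos : ∀ j, 1 ≤ lam j)
    (hle : ∀ j, lam j ≤ n) :
    ∃ e : MulU p t lam ≃ MulV p n t lam, (∀ μ ν, relU p t lam μ ν ↔ relV p n t lam (e μ) (e ν)) ∧
      ∀ μ, (IsLieU p t lam μ ↔ IsLieV p n t lam (e μ)) ∧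
        (IsNilU p t lam μ ↔ IsNilV p n t lam (e μ)) := by
  obtain ⟨m, rfl⟩ : ∃ m : Fin t → ℕ, lam = fun j => m j + 1 :=
    ⟨fun j => lam j - 1, funext fun j => (Nat.sub_add_cancel (hpos j)).symm⟩
  let := constantCoeffAlgebra (ZMod p)
  obtain ⟨E, hiso, hE⟩ := exists_torsionMul_equiv (R := Rn p n) Ideal.Quotient.mk_surjective
    (zmodPresentation p m) (isRegularQuotient_zmod p) (quotientPresentation X hle)
    (isRegularQuotient_X (ZMod p))
  let F := torsionMulIntEquiv p (Umod p t fun j => m j + 1)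
  refine ⟨F.trans E, fun μ ν => (iso_torsionMulIntEquiv_iff μ ν).symm.trans (hiso _ _),
    fun μ => ⟨(hE (F μ)).1, ?_⟩⟩
  rw [isNilU_iff, isNilV_iff]
  exact (hE (F μ)).2

theorem mult_correspondence_lie_general (p n t : ℕ) [NeZero p] (lam : Fin t → ℕ)
    (hpos : ∀ j, 1 ≤ lam j) (hle : ∀ j, lam j ≤ n) :
    ∃ Φ : Quot (relU p t lam) ≃ Quot (relV p n t lam),
      ∀ (μ : MulU p t lam) (ν : MulV p n t lam),
        Φ (Quot.mk _ μ) = Quot.mk _ ν →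
          (IsLieU p t lam μ ↔ IsLieV p n t lam ν) ∧
          (IsNilU p t lam μ ↔ IsNilV p n t lam ν) := by
  obtain ⟨e, hrel, he⟩ := exists_mulU_equiv_mulV p n t hpos hle
  exact ⟨Quot.congr e hrel, fun μ ν h =>
    ⟨(he μ).1.trans (iff_of_quot_mk_eq h fun _ _ => isLieV_congr),
      (he μ).2.trans (iff_of_quot_mk_eq h fun _ _ => isNilV_congr)⟩⟩

/-- For a partition `λ₁ ≥ ⋯ ≥ λ_t` of `n`, there is a bijection `Φ` between isomorphism classes
of biadditive multiplications on `U` killed by `p` and isomorphism classes of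
`R_n`-bilinear multiplications on `V` killed by `T`, such that a class is Lie iff its image
is Lie, and in that case it is nilpotent iff its image is nilpotent. -/
theorem mult_correspondence_lie (p n t : ℕ) (hp : p.Prime) (lam : Fin t → ℕ)
    (hmono : Antitone lam) (hpos : ∀ j, 1 ≤ lam j) (hsum : ∑ j, lam j = n) :
    ∃ Φ : Quot (relU p t lam) ≃ Quot (relV p n t lam),
      ∀ (μ : MulU p t lam) (ν : MulV p n t lam),
        Φ (Quot.mk _ μ) = Quot.mk _ ν →
          (IsLieU p t lam μ ↔ IsLieV p n t lam ν) ∧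
          (IsLieU p t lam μ → (IsNilU p t lam μ ↔ IsNilV p n t lam ν)) := by
  have : NeZero p := ⟨hp.ne_zero⟩
  obtain ⟨Φ, hΦ⟩ := mult_correspondence_lie_general p n t lam hpos fun j =>
    hsum ▸ Finset.single_le_sum (fun _ _ => Nat.zero_le _) (Finset.mem_univ j)
  exact ⟨Φ, fun μ ν h => (hΦ μ ν h).imp_right fun hnil _ => hnil⟩
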